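/- Let N be a Lagrangian chain-group on V to K = F², i.e., a totally isotropic subspace of K^V of dimension |V| with respect to ⟨f,g⟩ = Σ_x ⟨f(x),g(x)⟩_K. Then for all X ⊆ V, dim(N·X) − dim(N×X) = 2(|X| − dim(N×X)); equivalently λ_N(X) = |X| − dim(N×X) is an integer. -/

import Mathlib

variable {F : Type*} [Field F] {V : Type*} [Fintype V] [DecidableEq V]

/-- The symmetric bilinear form `b⁺((a,b),(c,d)) = ad + bc` on `K = F²`. -/
def bplus : F × F → F × F → F := fun x y => x.1 * y.2 + x.2 * y.1

/-- The skew-symmetric bilinear form `b⁻((a,b),(c,d)) = ad − bc` on `K = F²`. -/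
def bminus : F × F → F × F → F := fun x y => x.1 * y.2 - x.2 * y.1

/-- Restriction of chains to a subset `X` of the ground set. -/
def res (F K : Type*) [Semiring F] [AddCommMonoid K] [Module F K]
    {V : Type*} (X : Finset V) : (V → K) →ₗ[F] ({x // x ∈ X} → K) :=
  LinearMap.funLeft F K Subtype.val

/-- `N·X`, the restriction of the chain-group `N` to `X`. -/
def restrictTo {K : Type*} [AddCommGroup K] [Module F K]
    (N : Submodule F (V → K)) (X : Finset V) : Submodule F ({x // x ∈ X} → K) :=
  N.map (res F K X)

/-- Chains vanishing outside `X`. -/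
def vanish (F : Type*) [Semiring F] {K : Type*} [AddCommMonoid K] [Module F K]
    {V : Type*} (X : Finset V) : Submodule F (V → K) where
  carrier := {f | ∀ v ∉ X, f v = 0}
  add_mem' := by
    intro a b ha hb v hv
    simp only [Pi.add_apply, ha v hv, hb v hv, add_zero]
  zero_mem' := by intro v hv; rfl
  smul_mem' := by
    intro c a ha v hv
    simp only [Pi.smul_apply, ha v hv, smul_zero]

/-- `N×X`, the restriction to `X` of the chains in `N` vanishing outside `X`. -/
def timesTo {K : Type*} [AddCommGroup K] [Module F K]
    (N : Submodule F (V → K)) (X : Finset V) : Submodule F ({x // x ∈ X} → K) :=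
  (N ⊓ vanish F X).map (res F K X)

open Module

/-- Rank-nullity for the restriction of a linear map to a subspace. -/
theorem finrank_map_add_finrank_inf_ker {E W : Type*} [AddCommGroup E] [Module F E]
    [FiniteDimensional F E] [AddCommGroup W] [Module F W] (f : E →ₗ[F] W) (N : Submodule F E) :
    finrank F (N.map f) + finrank F (N ⊓ f.ker : Submodule F E) = finrank F N := by
  rw [← LinearMap.finrank_range_add_finrank_ker (f.domRestrict N), LinearMap.range_domRestrict,
    LinearMap.ker_domRestrict, ← Submodule.finrank_map_subtype_eq N (f.ker.comap N.subtype),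
    Submodule.map_comap_subtype]

/-- Two subspaces orthogonal for a bilinear form with trivial right kernel have dimensions
adding up to at most that of the space. -/
theorem finrank_add_finrank_le_of_orthogonal {W : Type*} [AddCommGroup W] [Module F W]
    [FiniteDimensional F W] (B : W →ₗ[F] W →ₗ[F] F) (hB : Function.Injective B.flip)
    (A C : Submodule F W) (h : ∀ a ∈ A, ∀ c ∈ C, B a c = 0) :
    finrank F A + finrank F C ≤ finrank F W := by
  have hle : C.map B.flip ≤ A.dualAnnihilator := by
    rintro _ ⟨c, hc, rfl⟩
    rw [Submodule.mem_dualAnnihilator]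
    exact fun a ha => h a ha c hc
  rw [← Subspace.finrank_add_finrank_dualAnnihilator_eq A,
    (Submodule.equivMapOfInjective B.flip hB C).finrank_eq]
  exact Nat.add_le_add_left (Submodule.finrank_mono hle) _

/-- The form `∑ x, (a x * d x + e * (b x * c x))` on chains `(a, b)`, `(c, d)` to `F²`. -/
def chainForm (e : F) (ι : Type*) [Fintype ι] : (ι → F × F) →ₗ[F] (ι → F × F) →ₗ[F] F :=
  LinearMap.mk₂ F (fun f g => ∑ x, ((f x).1 * (g x).2 + e * ((f x).2 * (g x).1)))
    (fun f f' g => by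
      rw [← Finset.sum_add_distrib]
      exact Finset.sum_congr rfl fun x _ => by
        simp only [Pi.add_apply, Prod.fst_add, Prod.snd_add]; ring)
    (fun c f g => by
      rw [smul_eq_mul, Finset.mul_sum]
      exact Finset.sum_congr rfl fun x _ => by
        simp only [Pi.smul_apply, Prod.smul_fst, Prod.smul_snd, smul_eq_mul]; ring)
    (fun f g g' => by
      rw [← Finset.sum_add_distrib]
      exact Finset.sum_congr rfl fun x _ => by
        simp only [Pi.add_apply, Prod.fst_add, Prod.snd_add]; ring)
    (fun c f g => by
      rw [smul_eq_mul, Finset.mul_sum]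
      exact Finset.sum_congr rfl fun x _ => by
        simp only [Pi.smul_apply, Prod.smul_fst, Prod.smul_snd, smul_eq_mul]; ring)

theorem chainForm_apply (e : F) {ι : Type*} [Fintype ι] (f g : ι → F × F) :
    chainForm e ι f g = ∑ x, ((f x).1 * (g x).2 + e * ((f x).2 * (g x).1)) := rfl

theorem chainForm_flip_injective {e : F} (he : e ≠ 0) (ι : Type*) [Fintype ι] :
    Function.Injective (chainForm e ι).flip := by
  classical
  rw [injective_iff_map_eq_zero]
  intro g hg
  have key : ∀ i (p : F × F), p.1 * (g i).2 + e * (p.2 * (g i).1) = 0 := by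
    intro i p
    have h := LinearMap.congr_fun hg (Pi.single i p)
    rw [LinearMap.flip_apply, chainForm_apply, Finset.sum_eq_single i] at h
    · simpa using h
    · intro j _ hj
      simp [Pi.single_eq_of_ne hj]
    · simp
  funext i
  have h₁ := key i (0, 1)
  have h₂ := key i (1, 0)
  simp only [zero_mul, one_mul, zero_add, add_zero, mul_zero, mul_eq_zero, he, false_or] at h₁ h₂
  exact Prod.ext h₁ h₂

theorem ker_res {K : Type*} [AddCommGroup K] [Module F K] (X : Finset V) :
    (res F K X).ker = vanish F Xᶜ := by
  ext f
  simp [LinearMap.mem_ker, funext_iff, res, vanish, LinearMap.funLeft_apply]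

theorem finrank_timesTo {K : Type*} [AddCommGroup K] [Module F K] [FiniteDimensional F K]
    (N : Submodule F (V → K)) (X : Finset V) :
    finrank F (timesTo N X) = finrank F (N ⊓ vanish F X : Submodule F (V → K)) := by
  have h : N ⊓ vanish F X ⊓ (res F K X).ker = ⊥ := by
    rw [ker_res, eq_bot_iff]
    rintro f ⟨⟨-, hf⟩, hf'⟩
    funext v
    by_cases hv : v ∈ X
    · exact hf' v (by simpa using hv)
    · exact hf v hv
  rw [← finrank_map_add_finrank_inf_ker (res F K X) (N ⊓ vanish F X), h, finrank_bot, add_zero]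
  rfl

theorem finrank_restrictTo_add_finrank_timesTo_compl {K : Type*} [AddCommGroup K] [Module F K]
    [FiniteDimensional F K] (N : Submodule F (V → K)) (X : Finset V) :
    finrank F (restrictTo N X) + finrank F (timesTo N Xᶜ) = finrank F N := by
  rw [finrank_timesTo, ← ker_res]
  exact finrank_map_add_finrank_inf_ker (res F K X) N

theorem finrank_restrictTo_add_finrank_timesTo_le {e : F} (he : e ≠ 0)
    (N : Submodule F (V → F × F)) (hN : ∀ u ∈ N, ∀ w ∈ N, chainForm e V u w = 0) (X : Finset V) :
    finrank F (restrictTo N X) + finrank F (timesTo N X) ≤ 2 * X.card := by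
  have h := finrank_add_finrank_le_of_orthogonal (chainForm e {x // x ∈ X})
    (chainForm_flip_injective he _) (restrictTo N X) (timesTo N X) (by
      rintro _ ⟨u, hu, rfl⟩ _ ⟨w, ⟨hw, hwX⟩, rfl⟩
      rw [← hN u hu w hw, chainForm_apply, chainForm_apply]
      refine (Finset.sum_coe_sort X
        fun x => (u x).1 * (w x).2 + e * ((u x).2 * (w x).1)).trans ?_
      refine Finset.sum_subset (Finset.subset_univ X) fun x _ hx => ?_
      simp [hwX x hx])
  rwa [finrank_pi_fintype, Finset.sum_const, finrank_prod, finrank_self, Finset.card_univ,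
    Fintype.card_coe, smul_eq_mul, mul_comm] at h

/-- For a Lagrangian chain-group `N` on `V` to `K = F²` (a totally isotropic
subspace of `K^V` of dimension `|V|`), for all `X ⊆ V`,
`dim(N·X) − dim(N×X) = 2(|X| − dim(N×X))`; in particular
`λ_N(X) = |X| − dim(N×X)` is an integer. -/
theorem lagrangian_lam_eq (β : F × F → F × F → F)
    (hβ : β = (bplus : F × F → F × F → F) ∨ β = (bminus : F × F → F × F → F))
    (N : Submodule F (V → F × F))
    (hiso : ∀ u ∈ N, ∀ w ∈ N, ∑ x, β (u x) (w x) = 0)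
    (hdim : Module.finrank F N = Fintype.card V) (X : Finset V) :
    (Module.finrank F (restrictTo N X) : ℤ)
        - (Module.finrank F (timesTo N X) : ℤ)
      = 2 * ((X.card : ℤ) - (Module.finrank F (timesTo N X) : ℤ)) := by
  obtain ⟨e, he, hβe⟩ : ∃ e : F, e ≠ 0 ∧ ∀ x y, β x y = x.1 * y.2 + e * (x.2 * y.1) := by
    rcases hβ with rfl | rfl
    · exact ⟨1, one_ne_zero, fun x y => by simp [bplus]⟩
    · exact ⟨-1, neg_ne_zero.mpr one_ne_zero, fun x y => by simp [bminus, sub_eq_add_neg]⟩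
  have hN : ∀ u ∈ N, ∀ w ∈ N, chainForm e V u w = 0 := fun u hu w hw => by
    simpa only [chainForm_apply, hβe] using hiso u hu w hw
  have h₁ := finrank_restrictTo_add_finrank_timesTo_le he N hN X
  have h₂ := finrank_restrictTo_add_finrank_timesTo_le he N hN Xᶜ
  have h₃ := finrank_restrictTo_add_finrank_timesTo_compl N X
  have h₄ := finrank_restrictTo_add_finrank_timesTo_compl N Xᶜ
  have h₅ := Finset.card_add_card_compl X
  rw [compl_compl] at h₄
  omega
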